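/- arXiv:1906.00135 — 8 statements merged into one kernel-verified Lean document; each statement's English description precedes it below -/
import Mathlib

section
/- For all integers m and n with n ≥ m ≥ 2, the 1/2-domination number of the Cartesian product of the path on m vertices with the path on n vertices is at least the product of the 1/2-domination numbers of the two paths: γ_{1/2}(P_m □ P_n) ≥ γ_{1/2}(P_m) · γ_{1/2}(P_n). -/
/-!
The inequality follows from a counting bound on the grid and a construction on the path.

* In a path on `n ≥ 2` vertices, the `⌈n/6⌉` vertices `1, 4, 7, …` dominate the first
  `min (3⌈n/6⌉) n ≥ n/2` vertices, so `γ_{1/2}(P_n) ≤ ⌈n/6⌉` (`pDomNum_path_le`).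
* In the grid a vertex dominates at most five vertices (`ncard_closedNbhd_grid_le`), so a
  1/2-dominating set has at least `mn/10` elements.

It remains to see `⌈m/6⌉⌈n/6⌉ ≤ ⌈mn/10⌉`.  If `m ≤ 6`, the first factor is `1` and
`n/6 ≤ 2n/10 ≤ mn/10`.  If `m, n ≥ 7`, then `(m+5)(n+5)/36 ≤ mn/10`, because
`26mn - 50(m+n) - 250 ≥ 0` in that range.
-/

open SimpleGraph

/-- The closed neighborhood `N[S]` of a set of vertices `S`:
all vertices equal or adjacent to some vertex of `S`. -/
def closedNbhd {V : Type*} (G : SimpleGraph V) (S : Set V) : Set V :=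
  {w | ∃ u ∈ S, w = u ∨ G.Adj u w}

/-- `S` is a `p`-dominating set of `G` if `N[S]` contains at least a proportion `p`
of the vertices. -/
def IsPDomSet {V : Type*} [Fintype V] (G : SimpleGraph V) (p : ℝ) (S : Set V) : Prop :=
  p * (Fintype.card V : ℝ) ≤ ((closedNbhd G S).ncard : ℝ)

/-- The `p`-domination number `γ_p(G)`: the minimum cardinality of a `p`-dominating set. -/
noncomputable def pDomNum {V : Type*} [Fintype V] (G : SimpleGraph V) (p : ℝ) : ℕ :=
  sInf {k : ℕ | ∃ S : Set V, IsPDomSet G p S ∧ S.ncard = k}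

lemma pDomNum_path_le (n : ℕ) (hn : 2 ≤ n) :
    pDomNum (pathGraph n) (1/2) ≤ (n + 5) / 6 := by
  set k := (n + 5) / 6 with hk
  let f : Fin k → Fin n := fun i => ⟨3 * i.1 + 1, by have := i.2; omega⟩
  have hcard : (f '' Set.univ).ncard ≤ k := by
    simpa using Set.ncard_image_le (f := f) (Set.toFinite Set.univ)
  refine le_trans (Nat.sInf_le ⟨f '' Set.univ, ?_, rfl⟩) hcard
  have hle : min (3 * k) n ≤ n := min_le_right _ _
  have hsub : Fin.castLE hle '' Set.univ ⊆ closedNbhd (pathGraph n) (f '' Set.univ) := by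
    rintro _ ⟨v, -, rfl⟩
    have hv := v.2
    -- the vertex `v` is dominated by the middle vertex of its block of three
    refine ⟨f ⟨v.1 / 3, by omega⟩, ⟨_, trivial, rfl⟩, ?_⟩
    simp only [pathGraph_adj, Fin.ext_iff, f, Fin.val_castLE]
    omega
  have h1 := Set.ncard_le_ncard hsub (Set.toFinite _)
  rw [Set.ncard_image_of_injective _ (Fin.castLE_injective hle), Set.ncard_univ,
    Nat.card_fin] at h1
  have h2 : n ≤ 2 * (closedNbhd (pathGraph n) (f '' Set.univ)).ncard := by omega
  have h3 : (n : ℝ) ≤ 2 * ((closedNbhd (pathGraph n) (f '' Set.univ)).ncard : ℝ) := by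
    exact_mod_cast h2
  unfold IsPDomSet
  rw [Fintype.card_fin]
  linarith

lemma ncard_closedNbhd_grid_le (m n : ℕ) (S : Set (Fin m × Fin n)) :
    (closedNbhd (pathGraph m □ pathGraph n) S).ncard ≤ 5 * S.ncard := by
  -- the four unit shifts, clamped at the boundary of the grid
  let up : ∀ l, Fin l → Fin l := fun l a => ⟨min (a.1 + 1) (l - 1), by have := a.2; omega⟩
  let dn : ∀ l, Fin l → Fin l := fun l a => ⟨a.1 - 1, by have := a.2; omega⟩
  let f₁ : Fin m × Fin n → Fin m × Fin n := fun u => (up m u.1, u.2)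
  let f₂ : Fin m × Fin n → Fin m × Fin n := fun u => (dn m u.1, u.2)
  let f₃ : Fin m × Fin n → Fin m × Fin n := fun u => (u.1, up n u.2)
  let f₄ : Fin m × Fin n → Fin m × Fin n := fun u => (u.1, dn n u.2)
  have hadj : ∀ l (a b : Fin l), (pathGraph l).Adj a b → up l a = b ∨ dn l a = b := by
    intro l a b h
    have := b.2
    simp only [pathGraph_adj] at h
    simp only [Fin.ext_iff, up, dn]
    omega
  have hsub : closedNbhd (pathGraph m □ pathGraph n) S ⊆
      S ∪ f₁ '' S ∪ f₂ '' S ∪ f₃ '' S ∪ f₄ '' S := by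
    rintro ⟨c, d⟩ ⟨⟨a, b⟩, hu, h | h⟩
    · rw [h]
      simp [hu]
    · rw [boxProd_adj] at h
      rcases h with ⟨h, rfl : b = d⟩ | ⟨h, rfl : a = c⟩
      · rcases hadj _ _ _ h with h | h
        · exact Or.inl (Or.inl (Or.inl (Or.inr ⟨_, hu, Prod.ext h rfl⟩)))
        · exact Or.inl (Or.inl (Or.inr ⟨_, hu, Prod.ext h rfl⟩))
      · rcases hadj _ _ _ h with h | h
        · exact Or.inl (Or.inr ⟨_, hu, Prod.ext rfl h⟩)
        · exact Or.inr ⟨_, hu, Prod.ext rfl h⟩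
  have h0 := Set.ncard_le_ncard hsub (Set.toFinite _)
  have u₁ := Set.ncard_union_le S (f₁ '' S)
  have u₂ := Set.ncard_union_le (S ∪ f₁ '' S) (f₂ '' S)
  have u₃ := Set.ncard_union_le (S ∪ f₁ '' S ∪ f₂ '' S) (f₃ '' S)
  have u₄ := Set.ncard_union_le (S ∪ f₁ '' S ∪ f₂ '' S ∪ f₃ '' S) (f₄ '' S)
  have i₁ := Set.ncard_image_le (f := f₁) (Set.toFinite S)
  have i₂ := Set.ncard_image_le (f := f₂) (Set.toFinite S)
  have i₃ := Set.ncard_image_le (f := f₃) (Set.toFinite S)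
  have i₄ := Set.ncard_image_le (f := f₄) (Set.toFinite S)
  omega

/-- The arithmetic core: `⌈m/6⌉⌈n/6⌉ ≤ ⌈mn/10⌉`. -/
lemma ceil_mul_ceil_le (m n s : ℕ) (hm : 2 ≤ m) (hmn : m ≤ n) (hs : m * n ≤ 10 * s) :
    (m + 5) / 6 * ((n + 5) / 6) ≤ s := by
  rcases Nat.lt_or_ge m 7 with h | h
  · have h1 : (m + 5) / 6 = 1 := by omega
    have h2 : 2 * n ≤ m * n := Nat.mul_le_mul_right n hm
    rw [h1]
    omega
  · have h1 : 6 * ((m + 5) / 6) ≤ m + 5 := Nat.mul_div_le _ _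
    have h2 : 6 * ((n + 5) / 6) ≤ n + 5 := Nat.mul_div_le _ _
    have h3 := Nat.mul_le_mul h1 h2
    obtain ⟨a, rfl⟩ := Nat.exists_eq_add_of_le h
    obtain ⟨b, rfl⟩ := Nat.exists_eq_add_of_le (h.trans hmn)
    nlinarith [Nat.zero_le (a * b)]

theorem stmt0 (m n : ℕ) (hm : 2 ≤ m) (hmn : m ≤ n) :
    pDomNum (pathGraph m) (1/2) * pDomNum (pathGraph n) (1/2) ≤
      pDomNum (pathGraph m □ pathGraph n) (1/2) := by
  refine (Nat.mul_le_mul (pDomNum_path_le m hm) (pDomNum_path_le n (hm.trans hmn))).trans ?_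
  -- the infimum is attained, since the whole vertex set is 1/2-dominating
  have hne : {k : ℕ | ∃ S : Set (Fin m × Fin n),
      IsPDomSet (pathGraph m □ pathGraph n) (1/2) S ∧ S.ncard = k}.Nonempty := by
    refine ⟨_, Set.univ, ?_, rfl⟩
    have huniv : closedNbhd (pathGraph m □ pathGraph n) Set.univ = Set.univ :=
      Set.eq_univ_of_forall fun w => ⟨w, trivial, Or.inl rfl⟩
    unfold IsPDomSet
    rw [huniv, Set.ncard_univ, Nat.card_eq_fintype_card]
    have : (0 : ℝ) ≤ (Fintype.card (Fin m × Fin n) : ℝ) := Nat.cast_nonneg _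
    linarith
  obtain ⟨S, hS, hcard⟩ := Nat.sInf_mem hne
  unfold pDomNum
  rw [← hcard]
  apply ceil_mul_ceil_le m n _ hm hmn
  unfold IsPDomSet at hS
  rw [Fintype.card_prod, Fintype.card_fin, Fintype.card_fin] at hS
  have h5 : ((closedNbhd (pathGraph m □ pathGraph n) S).ncard : ℝ) ≤ 5 * (S.ncard : ℝ) := by
    exact_mod_cast ncard_closedNbhd_grid_le m n S
  have h10 : ((m * n : ℕ) : ℝ) ≤ 10 * (S.ncard : ℝ) := by linarith
  exact_mod_cast h10
end

section
/- For all integers m, n ≥ 1, the 1/2-domination number of the Cartesian product of complete graphs satisfies γ_{1/2}(K_m □ K_n) = ⌈(m + n − √(m² + n²))/2⌉. -/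
/-!
A vertex `(a, b)` of `K_m □ K_n` lies in `N[S]` exactly when `a` is a first coordinate or `b` a
second coordinate of some element of `S`. So the vertices outside `N[S]` form a grid with
`(m - r) * (n - c)` elements, where `r` and `c` are the numbers of rows and columns met by `S`
(`ncard_closedNbhd_add`). Both are at most `k = |S|`, with equality for a diagonal set when
`k ≤ min m n`. Hence, for such `k`, a `1/2`-dominating set of size `k` exists iff
`2 (m - k) (n - k) ≤ m n`, that is `(m + n - 2k)² ≤ m² + n²`; as `m + n - 2k ≥ 0` this says
`(m + n - √(m² + n²)) / 2 ≤ k` (`two_mul_le_iff`). The left-hand side never exceeds `min m n`.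
-/

open SimpleGraph

/-- `S` is a `γ_p`-set: a `p`-dominating set of minimum cardinality `γ_p(G)`. -/
def IsGammaPSet {V : Type*} [Fintype V] (G : SimpleGraph V) (p : ℝ) (S : Set V) : Prop :=
  IsPDomSet G p S ∧ S.ncard = pDomNum G p

/-- `v` belongs to the `p`-influencing set of `G`, i.e. the union of all `γ_p`-sets. -/
def InInfluence {V : Type*} [Fintype V] (G : SimpleGraph V) (p : ℝ) (v : V) : Prop :=
  ∃ S : Set V, IsGammaPSet G p S ∧ v ∈ S

/-- The vertices not dominated by `S` in the rook graph form the grid of the rows and columns that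
`S` misses. -/
lemma compl_closedNbhd (m n : ℕ) (S : Set (Fin m × Fin n)) :
    (closedNbhd ((⊤ : SimpleGraph (Fin m)) □ (⊤ : SimpleGraph (Fin n))) S)ᶜ =
      (Prod.fst '' S)ᶜ ×ˢ (Prod.snd '' S)ᶜ := by
  ext ⟨a, b⟩
  simp only [closedNbhd, Set.mem_compl_iff, Set.mem_ofPred_eq, Set.mem_prod, Set.mem_image,
    Prod.exists, SimpleGraph.boxProd_adj, SimpleGraph.top_adj, Prod.mk.injEq]
  rw [← not_or, not_iff_not]
  constructor
  · rintro ⟨x, y, h, h' | h' | h'⟩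
    · exact Or.inl ⟨x, y, h, h'.1.symm⟩
    · exact Or.inr ⟨x, y, h, h'.2⟩
    · exact Or.inl ⟨x, y, h, h'.2⟩
  · rintro (⟨x, y, h, rfl⟩ | ⟨x, y, h, rfl⟩)
    · refine ⟨_, _, h, ?_⟩
      grind
    · refine ⟨_, _, h, ?_⟩
      grind

lemma ncard_closedNbhd_add (m n : ℕ) (S : Set (Fin m × Fin n)) :
    ((closedNbhd ((⊤ : SimpleGraph (Fin m)) □ (⊤ : SimpleGraph (Fin n))) S).ncard : ℝ) +
      ((m : ℝ) - (Prod.fst '' S).ncard) * ((n : ℝ) - (Prod.snd '' S).ncard) = m * n := by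
  have h := Set.ncard_add_ncard_compl
    (closedNbhd ((⊤ : SimpleGraph (Fin m)) □ (⊤ : SimpleGraph (Fin n))) S)
  have h1 := Set.ncard_add_ncard_compl (Prod.fst '' S)
  have h2 := Set.ncard_add_ncard_compl (Prod.snd '' S)
  rw [compl_closedNbhd, Set.ncard_prod] at h
  simp only [Nat.card_eq_fintype_card, Fintype.card_prod, Fintype.card_fin] at h h1 h2
  have h' : ((_ : ℕ) : ℝ) = ((_ : ℕ) : ℝ) := congrArg Nat.cast h
  have h1' : ((_ : ℕ) : ℝ) = ((_ : ℕ) : ℝ) := congrArg Nat.cast h1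
  have h2' : ((_ : ℕ) : ℝ) = ((_ : ℕ) : ℝ) := congrArg Nat.cast h2
  push_cast at h' h1' h2'
  rw [← h', ← h1', ← h2']
  ring

lemma isPDomSet_iff (m n : ℕ) (S : Set (Fin m × Fin n)) :
    IsPDomSet ((⊤ : SimpleGraph (Fin m)) □ (⊤ : SimpleGraph (Fin n))) (1/2) S ↔
      2 * (((m : ℝ) - (Prod.fst '' S).ncard) * ((n : ℝ) - (Prod.snd '' S).ncard)) ≤ m * n := by
  have h := ncard_closedNbhd_add m n S
  simp only [IsPDomSet, Fintype.card_prod, Fintype.card_fin]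
  push_cast
  constructor <;> intro <;> linarith

lemma two_mul_le_iff (a b k : ℝ) (ha : k ≤ a) (hb : k ≤ b) :
    2 * ((a - k) * (b - k)) ≤ a * b ↔ (a + b - Real.sqrt (a ^ 2 + b ^ 2)) / 2 ≤ k := by
  constructor
  · intro h'
    have := Real.le_sqrt_of_sq_le (x := a + b - 2 * k) (y := a ^ 2 + b ^ 2) (by nlinarith)
    linarith
  · intro h'
    have h1 : a + b - 2 * k ≤ Real.sqrt (a ^ 2 + b ^ 2) := by linarith
    have h2 := pow_le_pow_left₀ (by linarith) h1 2
    rw [Real.sq_sqrt (by positivity)] at h2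
    nlinarith

theorem stmt1 (m n : ℕ) (hm : 1 ≤ m) (hn : 1 ≤ n) :
    (pDomNum ((⊤ : SimpleGraph (Fin m)) □ (⊤ : SimpleGraph (Fin n))) (1/2) : ℤ) =
      ⌈((m : ℝ) + (n : ℝ) - Real.sqrt ((m : ℝ)^2 + (n : ℝ)^2)) / 2⌉ := by
  set x : ℝ := ((m : ℝ) + (n : ℝ) - Real.sqrt ((m : ℝ)^2 + (n : ℝ)^2)) / 2 with hx
  have hm0 : (0 : ℝ) ≤ m := Nat.cast_nonneg m
  have hn0 : (0 : ℝ) ≤ n := Nat.cast_nonneg n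
  have hsm : (m : ℝ) ≤ Real.sqrt ((m : ℝ)^2 + (n : ℝ)^2) := Real.le_sqrt_of_sq_le (by nlinarith)
  have hsn : (n : ℝ) ≤ Real.sqrt ((m : ℝ)^2 + (n : ℝ)^2) := Real.le_sqrt_of_sq_le (by nlinarith)
  have hs : Real.sqrt ((m : ℝ)^2 + (n : ℝ)^2) ≤ m + n :=
    Real.sqrt_le_iff.2 ⟨by positivity, by nlinarith⟩
  have hx0 : 0 ≤ x := by linarith
  have hxm : x ≤ m := by linarith
  have hxn : x ≤ n := by linarith
  rw [← Int.natCast_ceil_eq_ceil hx0, Nat.cast_inj]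
  have hkm : ⌈x⌉₊ ≤ m := Nat.ceil_le.2 hxm
  have hkn : ⌈x⌉₊ ≤ n := Nat.ceil_le.2 hxn
  refine IsLeast.csInf_eq ⟨?_, ?_⟩
  -- The diagonal set of size `⌈x⌉₊` meets as many rows and columns as possible.
  · set d : Fin ⌈x⌉₊ → Fin m × Fin n := fun i => (Fin.castLE hkm i, Fin.castLE hkn i) with hd
    have hd1 : Function.Injective (Prod.fst ∘ d) := Fin.castLE_injective hkm
    have hd2 : Function.Injective (Prod.snd ∘ d) := Fin.castLE_injective hkn
    have card_range : ∀ {α : Type} (f : Fin ⌈x⌉₊ → α), Function.Injective f →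
        (Set.range f).ncard = ⌈x⌉₊ := by
      intro α f hf
      rw [← Set.image_univ, Set.ncard_image_of_injective _ hf, Set.ncard_univ]
      simp
    refine ⟨Set.range d, ?_, card_range d hd1.of_comp⟩
    rw [isPDomSet_iff, ← Set.range_comp, ← Set.range_comp, card_range _ hd1, card_range _ hd2,
      two_mul_le_iff _ _ _ (by exact_mod_cast hkm) (by exact_mod_cast hkn)]
    exact Nat.le_ceil x
  · rintro k ⟨S, hS, rfl⟩
    rw [isPDomSet_iff] at hS
    have h1 : ((Prod.fst '' S).ncard : ℝ) ≤ S.ncard := by exact_mod_cast Set.ncard_image_le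
    have h2 : ((Prod.snd '' S).ncard : ℝ) ≤ S.ncard := by exact_mod_cast Set.ncard_image_le
    apply Nat.ceil_le.2
    by_contra! hlt
    refine absurd ((two_mul_le_iff m n S.ncard (by linarith) (by linarith)).1 ?_) (not_le.2 hlt)
    have : ((m : ℝ) - S.ncard) * ((n : ℝ) - S.ncard) ≤
        ((m : ℝ) - (Prod.fst '' S).ncard) * ((n : ℝ) - (Prod.snd '' S).ncard) :=
      mul_le_mul (by linarith) (by linarith) (by linarith) (by linarith)
    linarith
end

section
/- For all integers n ≥ 1 and m ≥ 1, the 1/2-domination number of the Cartesian product of the path on n vertices with the complete graph on m vertices satisfies γ_{1/2}(P_n □ K_m) = ⌈mn/(2(m+2))⌉. -/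
/-!
A vertex of `P_n □ K_m` dominates at most `m + 2` vertices (its `K_m`-fibre and two path
neighbours), so a half-dominating set has at least `mn / (2(m+2))` elements
(`ncard_closedNbhd_le`).

Conversely let `k = ⌈mn / (2(m+2))⌉`. If `n ≤ 2k`, one vertex in each of `k` fibres
dominates at least `mk ≥ mn/2` vertices. Otherwise it suffices to find `k` vertices, away from the two ends
of the path, whose closed neighbourhoods are pairwise disjoint (`exists_packing`), since these
dominate exactly `(m+2)k ≥ mn/2` vertices. For `m ≥ 2`, use the (0-based) positions `1, 3, …, 2k - 1`
with alternating `K_m`-coordinates; for `m = 1`, use the positions `1, 4, 7, …`, which fit because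
`k = ⌈n/6⌉`.
-/

open SimpleGraph

lemma mem_closedNbhd_box {n m : ℕ} (S : Set (Fin n × Fin m)) (w : Fin n × Fin m) :
    w ∈ closedNbhd (pathGraph n □ (⊤ : SimpleGraph (Fin m))) S ↔
      ∃ u ∈ S, w.1 = u.1 ∨
        (w.2 = u.2 ∧ ((u.1 : ℕ) + 1 = w.1 ∨ (w.1 : ℕ) + 1 = u.1)) := by
  simp only [closedNbhd, Set.mem_ofPred_eq, boxProd_adj, pathGraph_adj, top_adj, Prod.ext_iff]
  refine exists_congr fun u => and_congr_right fun _ => ?_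
  grind

/-- The map `(u, t) ↦` "the `t`-th closed neighbour of `u`" from `S × (m + 2 labels)` covers `N[S]`:
labels `some (some b)` give the fibre, `none` and `some none` the two path neighbours. -/
lemma ncard_closedNbhd_le {n m : ℕ} (hn : 1 ≤ n) (S : Set (Fin n × Fin m)) :
    (closedNbhd (pathGraph n □ (⊤ : SimpleGraph (Fin m))) S).ncard ≤ S.ncard * (m + 2) := by
  let f : (Fin n × Fin m) × Option (Option (Fin m)) → Fin n × Fin m := fun p =>
    match p.2 with
    | some (some b) => (p.1.1, b)
    -- At an end of the path the missing neighbour is replaced by a clamped, harmless value.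
    | none => (⟨p.1.1 - 1, by omega⟩, p.1.2)
    | some none => (⟨min (p.1.1 + 1) (n - 1), by omega⟩, p.1.2)
  have hsub : closedNbhd (pathGraph n □ (⊤ : SimpleGraph (Fin m))) S ⊆
      f '' (S ×ˢ Set.univ) := by
    intro w hw
    obtain ⟨u, hu, h⟩ := (mem_closedNbhd_box S w).1 hw
    rcases h with h | ⟨h2, h | h⟩
    · exact ⟨(u, some (some w.2)), ⟨hu, trivial⟩, Prod.ext h.symm rfl⟩
    · exact ⟨(u, some none), ⟨hu, trivial⟩, Prod.ext (Fin.ext (by simp [f]; omega)) h2.symm⟩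
    · exact ⟨(u, none), ⟨hu, trivial⟩, Prod.ext (Fin.ext (by simp [f]; omega)) h2.symm⟩
  calc _ ≤ (f '' (S ×ˢ Set.univ)).ncard := Set.ncard_le_ncard hsub
    _ ≤ (S ×ˢ (Set.univ : Set (Option (Option (Fin m))))).ncard := Set.ncard_image_le
    _ = S.ncard * (m + 2) := by
      rw [Set.ncard_prod, Set.ncard_univ]; simp

lemma exists_fibres {n m k : ℕ} (hm : 1 ≤ m) (hk : k ≤ n) :
    ∃ S : Set (Fin n × Fin m), S.ncard = k ∧
      k * m ≤ (closedNbhd (pathGraph n □ (⊤ : SimpleGraph (Fin m))) S).ncard := by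
  let s : Fin k → Fin n × Fin m := fun j => (Fin.castLE hk j, ⟨0, hm⟩)
  let g : Fin k × Fin m → Fin n × Fin m := fun p => (Fin.castLE hk p.1, p.2)
  have hs : s.Injective := fun i j h => Fin.castLE_injective hk (congrArg Prod.fst h)
  have hg : g.Injective := fun i j h => Prod.ext
    (Fin.castLE_injective hk (congrArg (fun x => x.1) h)) (congrArg (fun x => x.2) h :)
  refine ⟨Set.range s, by rw [Set.ncard_range_of_injective hs]; simp, ?_⟩
  have hsub : Set.range g ⊆
      closedNbhd (pathGraph n □ (⊤ : SimpleGraph (Fin m))) (Set.range s) := by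
    rintro _ ⟨p, rfl⟩
    exact (mem_closedNbhd_box _ _).2 ⟨s p.1, ⟨p.1, rfl⟩, Or.inl rfl⟩
  calc k * m = (Set.range g).ncard := by rw [Set.ncard_range_of_injective hg]; simp
    _ ≤ _ := Set.ncard_le_ncard hsub

/-- Interior vertices `(c j, l j)` whose path positions are at least `2` apart, with distinct
`K_m`-coordinates when exactly `2` apart, have disjoint closed neighbourhoods of size `m + 2`. -/
lemma exists_packing {n m k : ℕ} (c : Fin k → ℕ) (l : Fin k → Fin m)
    (h1 : ∀ j, 1 ≤ c j) (h2 : ∀ j, c j + 1 < n)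
    (hc : ∀ i j, i < j → c i + 2 ≤ c j ∧ (c i + 2 = c j → l i ≠ l j)) :
    ∃ S : Set (Fin n × Fin m), S.ncard = k ∧
      k * (m + 2) ≤ (closedNbhd (pathGraph n □ (⊤ : SimpleGraph (Fin m))) S).ncard := by
  let s : Fin k → Fin n × Fin m := fun j => (⟨c j, by have := h2 j; omega⟩, l j)
  let g : Fin k × Option (Option (Fin m)) → Fin n × Fin m := fun p =>
    match p.2 with
    | some (some b) => (⟨c p.1, by have := h2 p.1; omega⟩, b)
    | none => (⟨c p.1 - 1, by have := h2 p.1; omega⟩, l p.1)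
    | some none => (⟨c p.1 + 1, h2 p.1⟩, l p.1)
  have hs : s.Injective := by
    intro i j h
    have h := congrArg (fun x => (x.1 : ℕ)) h
    simp only [s] at h
    rcases lt_trichotomy i j with hij | hij | hij
    · have := hc i j hij; omega
    · exact hij
    · have := hc j i hij; omega
  have hg : g.Injective := by
    rintro ⟨i, a⟩ ⟨j, b⟩ h
    have e1 := congrArg (fun x => (x.1 : ℕ)) h
    have e2 := congrArg Prod.snd h
    have hi := h1 i
    have hj := h1 j
    rcases lt_trichotomy i j with hij | hij | hij
    · exfalso
      have := hc i j hij
      rcases a with _ | _ | a <;> rcases b with _ | _ | b <;> simp only [g] at e1 e2 <;> omega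
    · subst hij
      rcases a with _ | _ | a <;> rcases b with _ | _ | b <;> simp only [g] at e1 e2 <;>
        first | omega | rfl | rw [e2]
    · exfalso
      have := hc j i hij
      rcases a with _ | _ | a <;> rcases b with _ | _ | b <;> simp only [g] at e1 e2 <;> omega
  refine ⟨Set.range s, by rw [Set.ncard_range_of_injective hs]; simp, ?_⟩
  have hsub : Set.range g ⊆
      closedNbhd (pathGraph n □ (⊤ : SimpleGraph (Fin m))) (Set.range s) := by
    rintro _ ⟨⟨j, a⟩, rfl⟩
    refine (mem_closedNbhd_box _ _).2 ⟨s j, ⟨j, rfl⟩, ?_⟩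
    have := h1 j
    rcases a with _ | _ | a
    · exact Or.inr ⟨rfl, Or.inr (by simp only [g, s]; omega)⟩
    · exact Or.inr ⟨rfl, Or.inl rfl⟩
    · exact Or.inl rfl
  calc k * (m + 2) = (Set.range g).ncard := by rw [Set.ncard_range_of_injective hg]; simp
    _ ≤ _ := Set.ncard_le_ncard hsub

lemma isPDomSet_half_iff {n m : ℕ} (S : Set (Fin n × Fin m)) :
    IsPDomSet (pathGraph n □ (⊤ : SimpleGraph (Fin m))) (1 / 2) S ↔
      m * n ≤ 2 * (closedNbhd (pathGraph n □ (⊤ : SimpleGraph (Fin m))) S).ncard := by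
  rw [IsPDomSet, ← Nat.cast_le (α := ℝ)]
  simp only [Fintype.card_prod, Fintype.card_fin]
  push_cast
  constructor <;> intro h <;> linarith

lemma ceil_le_iff (n m k : ℕ) :
    ⌈((m : ℝ) * (n : ℝ)) / (2 * ((m : ℝ) + 2))⌉₊ ≤ k ↔ m * n ≤ 2 * (k * (m + 2)) := by
  rw [Nat.ceil_le, div_le_iff₀ (by positivity), ← Nat.cast_le (α := ℝ)]
  push_cast
  constructor <;> intro h <;> linarith

theorem stmt2 (n m : ℕ) (hn : 1 ≤ n) (hm : 1 ≤ m) :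
    pDomNum (pathGraph n □ (⊤ : SimpleGraph (Fin m))) (1/2) =
      ⌈((m : ℝ) * (n : ℝ)) / (2 * ((m : ℝ) + 2))⌉₊ := by
  have hceil := ceil_le_iff n m
  generalize ⌈((m : ℝ) * (n : ℝ)) / (2 * ((m : ℝ) + 2))⌉₊ = k at hceil
  have hk := (hceil k).1 le_rfl
  have key : ∃ S : Set (Fin n × Fin m),
      IsPDomSet (pathGraph n □ (⊤ : SimpleGraph (Fin m))) (1/2) S ∧ S.ncard = k := by
    simp only [isPDomSet_half_iff]
    by_cases h : n ≤ 2 * k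
    · obtain ⟨S, hS, hc⟩ := exists_fibres (n := n) (k := k) hm ((hceil n).2 (by nlinarith))
      exact ⟨S, by nlinarith, hS⟩
    · suffices ∃ S : Set (Fin n × Fin m), S.ncard = k ∧
          k * (m + 2) ≤ (closedNbhd (pathGraph n □ (⊤ : SimpleGraph (Fin m))) S).ncard by
        obtain ⟨S, hS, hc⟩ := this
        exact ⟨S, by omega, hS⟩
      by_cases hm2 : 2 ≤ m
      · refine exists_packing (fun j => 2 * j + 1) (fun j => ⟨j % 2, by omega⟩) ?_ ?_ ?_
        · intro j; omega
        · intro j; omega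
        · intro i j hij
          simp only [ne_eq, Fin.mk.injEq]
          omega
      · obtain rfl : m = 1 := by omega
        -- Here `k` is the least integer with `n ≤ 6 * k`, so `n ≤ 6 * (n / 3)` gives `k ≤ n / 3`.
        have hk3 := (hceil (n / 3)).2 (by omega)
        refine exists_packing (fun j => 3 * j + 1) (fun _ => 0) ?_ ?_ ?_
        · intro j; omega
        · intro j; omega
        · intro i j hij
          omega
  apply le_antisymm (Nat.sInf_le key)
  refine le_csInf ⟨k, key⟩ ?_
  rintro _ ⟨S, hS, rfl⟩
  have h1 := (isPDomSet_half_iff S).1 hS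
  have h2 := ncard_closedNbhd_le hn S
  exact (hceil _).2 (by omega)
end

section
/- For every finite simple graph G with at least one vertex, γ_{1/2}(G □ P_2) ≥ γ_{1/2}(G), where P_2 is the path on two vertices. -/
/-!
Project a half-dominating set `S` of `G □ P₂` to a set `A` of vertices of `G`. Projection maps each
closed neighbourhood of the product into the closed neighbourhood of the projected vertex, so
`N[S] ⊆ N[A] × P₂` and `|N[S]| ≤ 2 |N[A]|`. As `G □ P₂` has `2n` vertices, `A` dominates at
least half of `G`, and `|A| ≤ |S|`.
-/


open SimpleGraph

lemma closedNbhd_boxProd_subset {V W : Type*} (G : SimpleGraph V) (H : SimpleGraph W)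
    (S : Set (V × W)) :
    closedNbhd (G □ H) S ⊆ closedNbhd G (Prod.fst '' S) ×ˢ Set.univ := by
  rintro ⟨w, j⟩ ⟨⟨u, i⟩, hu, h⟩
  refine ⟨⟨u, ⟨_, hu, rfl⟩, ?_⟩, trivial⟩
  rcases h with h | h
  · exact Or.inl (congrArg Prod.fst h)
  · rcases boxProd_adj.1 h with ⟨hadj, -⟩ | ⟨-, heq⟩
    · exact Or.inr hadj
    · exact Or.inl heq.symm

lemma IsPDomSet.image_fst {V W : Type*} [Fintype V] [Fintype W] [Nonempty W]
    {G : SimpleGraph V} {H : SimpleGraph W} {p : ℝ} {S : Set (V × W)}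
    (hS : IsPDomSet (G □ H) p S) : IsPDomSet G p (Prod.fst '' S) := by
  have hcard := Set.ncard_le_ncard (closedNbhd_boxProd_subset G H S) (Set.toFinite _)
  rw [Set.ncard_prod, Set.ncard_univ, Nat.card_eq_fintype_card] at hcard
  have hcard' : ((closedNbhd (G □ H) S).ncard : ℝ) ≤
      (closedNbhd G (Prod.fst '' S)).ncard * (Fintype.card W : ℝ) := by exact_mod_cast hcard
  have hW : (0 : ℝ) < Fintype.card W := by exact_mod_cast Fintype.card_pos
  unfold IsPDomSet at hS ⊢
  rw [Fintype.card_prod, Nat.cast_mul, ← mul_assoc] at hS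
  exact le_of_mul_le_mul_right (hS.trans hcard') hW

theorem stmt3 {V : Type*} [Fintype V] [Nonempty V] (G : SimpleGraph V) :
    pDomNum G (1/2) ≤ pDomNum (G □ pathGraph 2) (1/2) := by
  -- The infimum defining `pDomNum` is attained only for a nonempty set; the whole vertex set
  -- is a witness.
  have hne : {k : ℕ | ∃ S : Set (V × Fin 2),
      IsPDomSet (G □ pathGraph 2) (1/2) S ∧ S.ncard = k}.Nonempty := by
    refine ⟨_, Set.univ, ?_, rfl⟩
    have huniv : closedNbhd (G □ pathGraph 2) Set.univ = Set.univ :=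
      Set.eq_univ_of_forall fun w => ⟨w, trivial, Or.inl rfl⟩
    unfold IsPDomSet
    rw [huniv, Set.ncard_univ, Nat.card_eq_fintype_card]
    have : (0 : ℝ) ≤ Fintype.card (V × Fin 2) := Nat.cast_nonneg _
    linarith
  obtain ⟨S, hS, hcard⟩ := Nat.sInf_mem hne
  calc pDomNum G (1/2) ≤ (Prod.fst '' S).ncard := Nat.sInf_le ⟨_, hS.image_fst, rfl⟩
    _ ≤ S.ncard := Set.ncard_image_le (Set.toFinite _)
    _ = pDomNum (G □ pathGraph 2) (1/2) := hcard
end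

section
/- Let G be a connected finite simple graph with γ_{1/2}(G) = 2. Then for every integer m ≥ 2, γ_{1/2}(G □ P_m) ≥ 2·γ_{1/2}(P_m). -/
/-!
The half-domination number of `P_m` is at most `t = ⌈m/6⌉`: the vertices `1, 4, 7, …` (`t` of them)
dominate the first `⌈m/2⌉` vertices (`pDomNum_pathGraph_le`).

On the other side, write `n = |V|`. No single vertex half-dominates `G`, so `2|N[v]| ≤ n - 1` for
every `v`. Thus `n ≥ 3`, so by connectedness every vertex has a neighbor, whence `|N[v]| ≥ 2` and
`n ≥ 5`. A vertex `(v, i)` of `G □ P_m` dominates at most `|N[v]| + 2` vertices, hence `k`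
vertices dominate at most `k (n + 3) / 2` (`two_mul_ncard_closedNbhd_boxProd_le`). For
`k ≤ 2t - 1` this is less than `n m / 2`, because `m ≥ 6t - 5`, `m ≥ 2` and `n ≥ 5`.
-/

open SimpleGraph

lemma ncard_closedNbhd_le_mul {V : Type*} [Fintype V] (G : SimpleGraph V) (S : Set V) (c : ℕ)
    (h : ∀ v, (closedNbhd G {v}).ncard ≤ c) : (closedNbhd G S).ncard ≤ S.ncard * c := by
  classical
  have hu : closedNbhd G S = ↑(S.toFinset.biUnion fun v => (closedNbhd G {v}).toFinset) := by
    ext w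
    simp only [Finset.coe_biUnion, Set.coe_toFinset, Set.mem_iUnion]
    simp [closedNbhd]
  rw [hu, Set.ncard_coe_finset, Set.ncard_eq_toFinset_card']
  refine Finset.card_biUnion_le_card_mul _ _ _ fun v _ => ?_
  rw [← Set.ncard_eq_toFinset_card']
  exact h v

lemma ncard_closedNbhd_boxProd_pathGraph_le {V : Type*} [Fintype V] (G : SimpleGraph V) (m : ℕ)
    (x : V × Fin m) :
    (closedNbhd (G □ pathGraph m) {x}).ncard ≤ (closedNbhd G {x.1}).ncard + 2 := by
  classical
  obtain ⟨v, i⟩ := x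
  have hsub : closedNbhd (G □ pathGraph m) {(v, i)} ⊆
      (fun w => (w, i)) '' closedNbhd G {v} ∪
        ((fun j => (v, j)) '' {j : Fin m | j.val + 1 = i.val} ∪
          (fun j => (v, j)) '' {j : Fin m | i.val + 1 = j.val}) := by
    rintro ⟨w, j⟩ ⟨u, rfl, h⟩
    simp only [boxProd_adj, pathGraph_adj, Prod.mk.injEq] at h
    simp only [closedNbhd, Set.mem_union, Set.mem_image, Set.mem_ofPred_eq, Prod.mk.injEq,
      Set.mem_singleton_iff, exists_eq_left]
    grind
  have h1 : ∀ A : Set (Fin m), (∀ a ∈ A, ∀ b ∈ A, a = b) →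
      ((fun j => (v, j)) '' A).ncard ≤ 1 := fun A hA =>
    (Set.ncard_image_le (Set.toFinite _)).trans
      ((Set.ncard_le_one (Set.toFinite _)).2 hA)
  calc _ ≤ _ := Set.ncard_le_ncard hsub (Set.toFinite _)
    _ ≤ _ := Set.ncard_union_le _ _
    _ ≤ (closedNbhd G {v}).ncard + (1 + 1) := by
      refine Nat.add_le_add (Set.ncard_image_le (Set.toFinite _))
        ((Set.ncard_union_le _ _).trans (Nat.add_le_add (h1 _ ?_) (h1 _ ?_)))
      · intro a ha b hb
        simp only [Set.mem_ofPred_eq] at ha hb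
        omega
      · intro a ha b hb
        simp only [Set.mem_ofPred_eq] at ha hb
        omega

lemma two_mul_ncard_closedNbhd_boxProd_le {V : Type*} [Fintype V] (G : SimpleGraph V) (m : ℕ)
    (h : ∀ v, 2 * (closedNbhd G {v}).ncard + 1 ≤ Fintype.card V) (S : Set (V × Fin m)) :
    2 * (closedNbhd (G □ pathGraph m) S).ncard ≤ S.ncard * (Fintype.card V + 3) := by
  have h1 := ncard_closedNbhd_le_mul (G □ pathGraph m) S ((Fintype.card V - 1) / 2 + 2)
    fun x => by
      have := ncard_closedNbhd_boxProd_pathGraph_le G m x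
      have := h x.1
      omega
  rcases S.eq_empty_or_nonempty with rfl | ⟨x, -⟩
  · simp [closedNbhd]
  · have hx := h x.1
    calc _ ≤ 2 * (S.ncard * ((Fintype.card V - 1) / 2 + 2)) := by omega
      _ = S.ncard * (2 * ((Fintype.card V - 1) / 2 + 2)) := by ring
      _ ≤ _ := Nat.mul_le_mul_left _ (by omega)

/-- `(m + 5) / 6` is `⌈m / 6⌉`, and the vertices `3 i + 1` with `i < ⌈m / 6⌉` half-dominate the
path. -/
lemma pDomNum_pathGraph_le (m : ℕ) (hm : 2 ≤ m) :
    pDomNum (pathGraph m) (1/2) ≤ (m + 5) / 6 := by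
  classical
  -- The minimum makes `f` total; for `i < ⌈m / 6⌉` it equals `3 i + 1`.
  let f : ℕ → Fin m := fun i => ⟨min (3 * i + 1) (m - 1), by omega⟩
  let S : Finset (Fin m) := (Finset.range ((m + 5) / 6)).image f
  have hcard : (S : Set (Fin m)).ncard ≤ (m + 5) / 6 := by
    rw [Set.ncard_coe_finset]
    exact Finset.card_image_le.trans (by simp)
  refine le_trans (Nat.sInf_le ⟨S, ?_, rfl⟩) hcard
  have hsub : Set.range (Fin.castLE (show (m + 1) / 2 ≤ m by omega)) ⊆
      closedNbhd (pathGraph m) S := by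
    rintro _ ⟨j, rfl⟩
    have hj := j.isLt
    refine ⟨f (j.val / 3), ?_, ?_⟩
    · simp only [S, Finset.coe_image, Finset.coe_range]
      exact ⟨j.val / 3, by simp only [Set.mem_Iio]; omega, rfl⟩
    · simp only [f, pathGraph_adj, Fin.ext_iff, Fin.val_castLE]
      omega
  have hle := Set.ncard_le_ncard hsub (Set.toFinite _)
  rw [← Set.image_univ, Set.ncard_image_of_injective _ (Fin.castLE_injective _),
    Set.ncard_univ, Nat.card_eq_fintype_card, Fintype.card_fin] at hle
  have h2 : m ≤ 2 * (closedNbhd (pathGraph m) (S : Set (Fin m))).ncard := by omega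
  have h3 : (m : ℝ) ≤ 2 * ((closedNbhd (pathGraph m) (S : Set (Fin m))).ncard : ℝ) := by
    exact_mod_cast h2
  simp only [IsPDomSet, Fintype.card_fin]
  linarith

/-- The whole vertex set is half-dominating, so the infimum defining the half-domination number is
attained. -/
lemma exists_isPDomSet_half_ncard_eq {V : Type*} [Fintype V] (G : SimpleGraph V) :
    ∃ S : Set V, IsPDomSet G (1/2) S ∧ S.ncard = pDomNum G (1/2) := by
  refine Nat.sInf_mem (s := {k : ℕ | ∃ S : Set V, IsPDomSet G (1/2) S ∧ S.ncard = k})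
    ⟨_, Set.univ, ?_, rfl⟩
  have : closedNbhd G Set.univ = Set.univ := by
    ext w
    simp [closedNbhd]
  rw [IsPDomSet, this, Set.ncard_univ, Nat.card_eq_fintype_card]
  have : (0 : ℝ) ≤ Fintype.card V := Nat.cast_nonneg _
  linarith

theorem stmt5 {V : Type*} [Fintype V] (G : SimpleGraph V) (hconn : G.Connected)
    (hG : pDomNum G (1/2) = 2) (m : ℕ) (hm : 2 ≤ m) :
    2 * pDomNum (pathGraph m) (1/2) ≤ pDomNum (G □ pathGraph m) (1/2) := by
  classical
  have hN : ∀ v, 2 * (closedNbhd G {v}).ncard + 1 ≤ Fintype.card V := by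
    intro v
    by_contra hlt
    have h1 : Fintype.card V ≤ 2 * (closedNbhd G {v}).ncard := by omega
    have h2 : (Fintype.card V : ℝ) ≤ 2 * ((closedNbhd G {v}).ncard : ℝ) := by exact_mod_cast h1
    have h3 : pDomNum G (1/2) ≤ 1 :=
      Nat.sInf_le ⟨{v}, by rw [IsPDomSet]; linarith, Set.ncard_singleton v⟩
    omega
  have hn : 5 ≤ Fintype.card V := by
    obtain ⟨v⟩ := hconn.nonempty
    have hv : v ∈ closedNbhd G {v} := ⟨v, rfl, Or.inl rfl⟩
    have h1 : 0 < (closedNbhd G {v}).ncard := (Set.ncard_pos (Set.toFinite _)).2 ⟨v, hv⟩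
    have h3 := hN v
    have : Nontrivial V := Fintype.one_lt_card_iff_nontrivial.1 (by omega)
    obtain ⟨w, hw⟩ := hconn.preconnected.exists_adj_of_nontrivial v
    have h2 : 1 < (closedNbhd G {v}).ncard :=
      (Set.one_lt_ncard (Set.toFinite _)).2 ⟨v, hv, w, ⟨v, rfl, Or.inr hw⟩, hw.ne⟩
    omega
  obtain ⟨S, hS, hk⟩ := exists_isPDomSet_half_ncard_eq (G □ pathGraph m)
  have hP := pDomNum_pathGraph_le m hm
  have hB := two_mul_ncard_closedNbhd_boxProd_le G m hN S
  rw [← hk]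
  by_contra hlt
  have hdom : Fintype.card V * m ≤ 2 * (closedNbhd (G □ pathGraph m) S).ncard := by
    rw [IsPDomSet, Fintype.card_prod, Fintype.card_fin] at hS
    have : ((Fintype.card V * m : ℕ) : ℝ) ≤
        2 * ((closedNbhd (G □ pathGraph m) S).ncard : ℝ) := by linarith
    exact_mod_cast this
  generalize Fintype.card V = n at *
  obtain ⟨t, ht⟩ : ∃ t, (m + 5) / 6 = t + 1 := ⟨(m + 5) / 6 - 1, by omega⟩
  have hS1 : S.ncard ≤ 2 * t + 1 := by omega
  have hfin : n * m ≤ (2 * t + 1) * (n + 3) :=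
    hdom.trans (hB.trans (Nat.mul_le_mul_right _ hS1))
  have hm1 : 6 * t + 1 ≤ m := by omega
  rcases Nat.eq_zero_or_pos t with rfl | htpos
  · nlinarith
  · nlinarith [Nat.mul_le_mul_left n hm1, Nat.mul_le_mul hn htpos, Nat.mul_le_mul_right t hn]
end

section
/- Let G be a finite simple graph with at least one vertex, let p ∈ (0,1], and let v be a vertex of maximum degree in G. Then there exists a γ_p-set S of G containing a vertex at distance at most 2 from v; that is, S contains v, a neighbor of v, or a distance-two neighbor of v (equivalently, S ∩ N[N[v]] ≠ ∅). -/
/-! Start from any `γ_p`-set `S`; it is nonempty because `p * |V| > 0`. If `S` misses `N[N[v]]`,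
exchange an arbitrary `u ∈ S` for `v`. The size is unchanged since `v ∉ S`. As `S` misses
`N[N[v]]`, the sets `N[S \ {u}]` and `N[v]` are disjoint, so the new set dominates exactly
`|N[S \ {u}]| + |N[v]|` vertices, whereas `S` dominates at most `|N[S \ {u}]| + |N[u]|`, and
`|N[u]| ≤ |N[v]|` by maximality of the degree of `v`. -/

open SimpleGraph

lemma closedNbhd_insert {V : Type*} (G : SimpleGraph V) (u : V) (T : Set V) :
    closedNbhd G (insert u T) = closedNbhd G T ∪ closedNbhd G {u} := by
  ext w
  simp only [closedNbhd, Set.mem_insert_iff, Set.mem_singleton_iff, Set.mem_ofPred_eq,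
    Set.mem_union, exists_eq_or_imp, exists_eq_left]
  exact or_comm

lemma closedNbhd_singleton {V : Type*} (G : SimpleGraph V) (u : V) :
    closedNbhd G {u} = insert u (G.neighborSet u) := by
  ext w
  simp [closedNbhd]

lemma ncard_closedNbhd_singleton {V : Type*} [Fintype V] (G : SimpleGraph V) (u : V) :
    (closedNbhd G {u}).ncard = (G.neighborSet u).ncard + 1 := by
  rw [closedNbhd_singleton, Set.ncard_insert_of_notMem (by simp) (Set.toFinite _)]

lemma exists_isGammaPSet {V : Type*} [Fintype V] (G : SimpleGraph V) {p : ℝ} (hp1 : p ≤ 1) :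
    ∃ S : Set V, IsGammaPSet G p S := by
  have huniv : IsPDomSet G p Set.univ := by
    have h : closedNbhd G Set.univ = Set.univ :=
      Set.eq_univ_of_forall fun w => ⟨w, Set.mem_univ w, Or.inl rfl⟩
    rw [IsPDomSet, h, Set.ncard_univ, Nat.card_eq_fintype_card]
    exact mul_le_of_le_one_left (Nat.cast_nonneg _) hp1
  exact Nat.sInf_mem (s := {k : ℕ | ∃ S : Set V, IsPDomSet G p S ∧ S.ncard = k})
    ⟨_, Set.univ, huniv, rfl⟩

lemma IsPDomSet.nonempty {V : Type*} [Fintype V] [Nonempty V] {G : SimpleGraph V} {p : ℝ}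
    {S : Set V} (hp0 : 0 < p) (hS : IsPDomSet G p S) : S.Nonempty := by
  rw [Set.nonempty_iff_ne_empty]
  rintro rfl
  have h : 0 < p * (Fintype.card V : ℝ) := mul_pos hp0 (Nat.cast_pos.mpr Fintype.card_pos)
  simp only [IsPDomSet, closedNbhd, Set.mem_empty_iff_false, false_and, exists_false,
    Set.ofPred_false, Set.ncard_empty, Nat.cast_zero] at hS
  exact absurd hS (not_le.mpr h)

theorem stmt7 {V : Type*} [Fintype V] [Nonempty V] (G : SimpleGraph V)
    (p : ℝ) (hp0 : 0 < p) (hp1 : p ≤ 1) (v : V)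
    (hv : ∀ u : V, (G.neighborSet u).ncard ≤ (G.neighborSet v).ncard) :
    ∃ S : Set V, IsGammaPSet G p S ∧
      (S ∩ closedNbhd G (closedNbhd G {v})).Nonempty := by
  obtain ⟨S, hS, hcard⟩ := exists_isGammaPSet G hp1
  by_cases hmeet : (S ∩ closedNbhd G (closedNbhd G {v})).Nonempty
  · exact ⟨S, ⟨hS, hcard⟩, hmeet⟩
  have hfar : ∀ x ∈ S, x ∉ closedNbhd G (closedNbhd G {v}) :=
    fun x hx hx' => hmeet ⟨x, hx, hx'⟩
  have hvv : v ∈ closedNbhd G (closedNbhd G {v}) :=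
    ⟨v, ⟨v, rfl, Or.inl rfl⟩, Or.inl rfl⟩
  have hvS : v ∉ S := fun h => hfar v h hvv
  obtain ⟨u, hu⟩ := hS.nonempty hp0
  have hdisj : Disjoint (closedNbhd G (S \ {u})) (closedNbhd G {v}) := by
    rw [Set.disjoint_left]
    rintro w ⟨x, hx, hxw⟩ hw
    exact hfar x hx.1 ⟨w, hw, hxw.imp Eq.symm (fun h => h.symm)⟩
  have hle : (closedNbhd G S).ncard ≤ (closedNbhd G (insert v (S \ {u}))).ncard :=
    calc (closedNbhd G S).ncard
        = (closedNbhd G (S \ {u}) ∪ closedNbhd G {u}).ncard := by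
          rw [← closedNbhd_insert, Set.insert_sdiff_singleton, Set.insert_eq_of_mem hu]
      _ ≤ (closedNbhd G (S \ {u})).ncard + (closedNbhd G {u}).ncard := Set.ncard_union_le _ _
      _ ≤ (closedNbhd G (S \ {u})).ncard + (closedNbhd G {v}).ncard := by
          rw [ncard_closedNbhd_singleton, ncard_closedNbhd_singleton]
          have := hv u
          omega
      _ = (closedNbhd G (insert v (S \ {u}))).ncard := by
          rw [closedNbhd_insert, Set.ncard_union_eq hdisj (Set.toFinite _) (Set.toFinite _)]
  refine ⟨insert v (S \ {u}), ⟨hS.trans (Nat.cast_le.mpr hle), ?_⟩,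
    v, Set.mem_insert _ _, hvv⟩
  rw [← hcard]
  exact Set.ncard_exchange hvS hu
end

section
/- Let K_{m,n} be the complete bipartite graph with parts V_1 and V_2 of sizes m and n respectively, where m > n ≥ 1. Then: (i) for every real p with 0 < p ≤ (n+1)/(m+n), the p-influencing set of K_{m,n} is V_1 ∪ V_2; (ii) for every real p with (m+2)/(m+n) ≤ p ≤ 1, the p-influencing set of K_{m,n} is V_1 ∪ V_2; and (iii) for every real p with (n+2)/(m+n) ≤ p ≤ (m+1)/(m+n), the p-influencing set of K_{m,n} is V_2. -/
/-!
In `K_{m,n}` a vertex of the part of size `m` has a closed neighbourhood of size `n + 1`, a vertex of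
the part of size `n` one of size `m + 1`, and two vertices in different parts dominate everything.
For `p > 0` the empty set is not `p`-dominating. Hence, writing `N = m + n`: if `pN ≤ n + 1` every
singleton is a `γ_p`-set; if `n + 1 < pN ≤ m + 1` the `γ_p`-sets are exactly the singletons in the part
of size `n`; and if `m + 1 < pN ≤ N` no singleton is `p`-dominating, so that any two vertices in
different parts form a `γ_p`-set.
-/

open SimpleGraph

/-- A `p`-dominating set that is no larger than any other is a `γ_p`-set. -/
lemma isGammaPSet_of_le {V : Type*} [Fintype V] {G : SimpleGraph V} {p : ℝ} {S : Set V}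
    (hS : IsPDomSet G p S) (hmin : ∀ T, IsPDomSet G p T → S.ncard ≤ T.ncard) :
    IsGammaPSet G p S := by
  refine ⟨hS, le_antisymm ?_ (Nat.sInf_le ⟨S, hS, rfl⟩)⟩
  refine le_csInf ⟨_, S, hS, rfl⟩ ?_
  rintro k ⟨T, hT, rfl⟩
  exact hmin T hT

lemma IsGammaPSet.ncard_le {V : Type*} [Fintype V] {G : SimpleGraph V} {p : ℝ} {S T : Set V}
    (hS : IsGammaPSet G p S) (hT : IsPDomSet G p T) : S.ncard ≤ T.ncard :=
  hS.2.trans_le (Nat.sInf_le ⟨T, hT, rfl⟩)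

lemma IsPDomSet.one_le_ncard {V : Type*} [Fintype V] {G : SimpleGraph V} {p : ℝ} {T : Set V}
    (hp : 0 < p * (Fintype.card V : ℝ)) (hT : IsPDomSet G p T) : 1 ≤ T.ncard := by
  rw [Nat.one_le_iff_ne_zero, Ne, Set.ncard_eq_zero]
  rintro rfl
  simp only [IsPDomSet, closedNbhd, Set.mem_empty_iff_false, false_and, exists_false,
    Set.ofPred_false, Set.ncard_empty, Nat.cast_zero] at hT
  linarith

lemma ncard_closedNbhd_inl (m n : ℕ) (i : Fin m) :
    (closedNbhd (completeBipartiteGraph (Fin m) (Fin n)) {Sum.inl i}).ncard = n + 1 := by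
  have h : closedNbhd (completeBipartiteGraph (Fin m) (Fin n)) {Sum.inl i} =
      insert (Sum.inl i) (Set.range Sum.inr) := by
    ext (w | w) <;> simp [closedNbhd]
  rw [h, Set.ncard_insert_of_notMem (by simp), ← Set.image_univ,
    Set.ncard_image_of_injective _ Sum.inr_injective]
  simp

lemma ncard_closedNbhd_inr (m n : ℕ) (j : Fin n) :
    (closedNbhd (completeBipartiteGraph (Fin m) (Fin n)) {Sum.inr j}).ncard = m + 1 := by
  have h : closedNbhd (completeBipartiteGraph (Fin m) (Fin n)) {Sum.inr j} =
      insert (Sum.inr j) (Set.range Sum.inl) := by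
    ext (w | w) <;> simp [closedNbhd]
  rw [h, Set.ncard_insert_of_notMem (by simp), ← Set.image_univ,
    Set.ncard_image_of_injective _ Sum.inl_injective]
  simp

lemma isPDomSet_inl {m n : ℕ} {p : ℝ} (i : Fin m) :
    IsPDomSet (completeBipartiteGraph (Fin m) (Fin n)) p {Sum.inl i} ↔
      p * ((m : ℝ) + n) ≤ n + 1 := by
  simp [IsPDomSet, ncard_closedNbhd_inl]

lemma isPDomSet_inr {m n : ℕ} {p : ℝ} (j : Fin n) :
    IsPDomSet (completeBipartiteGraph (Fin m) (Fin n)) p {Sum.inr j} ↔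
      p * ((m : ℝ) + n) ≤ m + 1 := by
  simp [IsPDomSet, ncard_closedNbhd_inr]

/-- Two vertices in different parts dominate the whole graph. -/
lemma isPDomSet_pair {m n : ℕ} {p : ℝ} (hp : p ≤ 1) (i : Fin m) (j : Fin n) :
    IsPDomSet (completeBipartiteGraph (Fin m) (Fin n)) p {Sum.inl i, Sum.inr j} := by
  have h : closedNbhd (completeBipartiteGraph (Fin m) (Fin n)) {Sum.inl i, Sum.inr j} =
      Set.univ := by
    ext (w | w) <;> simp [closedNbhd]
  rw [IsPDomSet, h, Set.ncard_univ, Nat.card_eq_fintype_card]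
  exact mul_le_of_le_one_left (Nat.cast_nonneg _) hp

theorem stmt13 (m n : ℕ) (hn : 1 ≤ n) (hmn : n < m) :
    (∀ p : ℝ, 0 < p → p ≤ ((n : ℝ) + 1) / ((m : ℝ) + (n : ℝ)) →
      ∀ v : Fin m ⊕ Fin n, InInfluence (completeBipartiteGraph (Fin m) (Fin n)) p v) ∧
    (∀ p : ℝ, ((m : ℝ) + 2) / ((m : ℝ) + (n : ℝ)) ≤ p → p ≤ 1 →
      ∀ v : Fin m ⊕ Fin n, InInfluence (completeBipartiteGraph (Fin m) (Fin n)) p v) ∧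
    (∀ p : ℝ, ((n : ℝ) + 2) / ((m : ℝ) + (n : ℝ)) ≤ p →
      p ≤ ((m : ℝ) + 1) / ((m : ℝ) + (n : ℝ)) →
      ∀ v : Fin m ⊕ Fin n,
        InInfluence (completeBipartiteGraph (Fin m) (Fin n)) p v ↔ v.isRight) := by
  have hN : (0 : ℝ) < (m : ℝ) + n := by
    have : (1 : ℝ) ≤ n := by exact_mod_cast hn
    positivity
  have hmn' : (n : ℝ) < m := by exact_mod_cast hmn
  have hcard : (Fintype.card (Fin m ⊕ Fin n) : ℝ) = (m : ℝ) + n := by simp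
  refine ⟨fun p hp0 hp v => ?_, fun p hp hp1 v => ?_, fun p hp hp' v => ?_⟩
  · rw [le_div_iff₀ hN] at hp
    refine ⟨{v}, isGammaPSet_of_le ?_ fun T hT => ?_, rfl⟩
    · rcases v with i | j
      · exact (isPDomSet_inl i).2 hp
      · exact (isPDomSet_inr j).2 (by linarith)
    · rw [Set.ncard_singleton]
      exact hT.one_le_ncard (by rw [hcard]; positivity)
  · rw [div_le_iff₀ hN] at hp
    have key : ∀ (i : Fin m) (j : Fin n), IsGammaPSet (completeBipartiteGraph (Fin m) (Fin n)) p
        {Sum.inl i, Sum.inr j} := by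
      intro i j
      refine isGammaPSet_of_le (isPDomSet_pair hp1 i j) fun T hT => ?_
      rw [Set.ncard_pair (by simp)]
      have h1 : 1 ≤ T.ncard := hT.one_le_ncard (by rw [hcard]; linarith)
      have h2 : T.ncard ≠ 1 := by
        intro h
        obtain ⟨w, rfl⟩ := Set.ncard_eq_one.1 h
        rcases w with a | b
        · have := (isPDomSet_inl a).1 hT
          linarith
        · have := (isPDomSet_inr b).1 hT
          linarith
      omega
    rcases v with i | j
    · exact ⟨_, key i ⟨0, hn⟩, by simp⟩
    · exact ⟨_, key ⟨0, by omega⟩ j, by simp⟩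
  · rw [div_le_iff₀ hN] at hp
    rw [le_div_iff₀ hN] at hp'
    have hpos : 0 < p * (Fintype.card (Fin m ⊕ Fin n) : ℝ) := by
      rw [hcard]
      linarith [(Nat.cast_nonneg n : (0 : ℝ) ≤ n)]
    rcases v with i | j
    · simp only [Sum.isRight_inl, Bool.false_eq_true, iff_false]
      rintro ⟨S, hS, hi⟩
      have hle := hS.ncard_le ((isPDomSet_inr (⟨0, hn⟩ : Fin n)).2 hp')
      rw [Set.ncard_singleton] at hle
      obtain ⟨w, rfl⟩ := Set.ncard_eq_one.1 (le_antisymm hle (hS.1.one_le_ncard hpos))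
      rw [Set.mem_singleton_iff] at hi
      subst hi
      have := (isPDomSet_inl i).1 hS.1
      linarith
    · simp only [Sum.isRight_inr, iff_true]
      refine ⟨{Sum.inr j}, isGammaPSet_of_le ((isPDomSet_inr j).2 hp') fun T hT => ?_, rfl⟩
      rw [Set.ncard_singleton]
      exact hT.one_le_ncard hpos
end

section
/- Let P_n be the path with vertices v_1, …, v_n (v_i adjacent to v_{i+1}), where n ≥ 2 and n ≡ 2 (mod 3). Then: (i) for every integer k ≥ 0 with (3k+1)/n ≤ 1, the p-influencing set of P_n for p = (3k+1)/n, and for p = (3k+2)/n when (3k+2)/n < 1, is the whole vertex set {v_1, …, v_n}; (ii) for every integer k ≥ 1 with 3k ≤ n − 2, the p-influencing set of P_n for p = 3k/n is {v_2, v_3, …, v_{n−1}}; and (iii) for p = 1, the p-influencing set of P_n is {v_1, …, v_n} \ {v_3, v_6, v_9, …, v_{n−2}} (the vertices v_i with i ≢ 0 (mod 3)). -/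
/-!
Every closed neighborhood in a path has at most three vertices, so a set covering `t` vertices has
at least `⌈t / 3⌉` elements. Conversely, the closed neighborhoods of vertices in a common residue
class modulo `3` are disjoint, and each has exactly three vertices unless its centre is a leaf
(then two). As `n ≡ 2 (mod 3)`, the two leaves `0` and `n - 1` lie in different classes, so `k`
vertices of one class cover at least `3k - 1` vertices, and `3k` if they avoid the leaves. Thus
`γ_p = ⌈pn / 3⌉` whenever `pn` is a positive integer at most `n`, and the required `γ_p`-sets are
taken inside arithmetic progressions of difference `3` (`exists_prog`). The one exception is a
vertex of residue `2` for `pn = n - 1`: that class is one vertex short, and the leaf `0` is added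
to it (`exists_cover_res_two`).

For the exclusions: a set of `k` vertices covering `3k` cannot contain a leaf
(`interior_of_cover`). If a dominating set contains `v = 3j + 2`, the `3j + 1` vertices
below `N[v]` need `j + 1` elements below `v`, and the `n - v - 2 ≡ 1 (mod 3)` vertices above `N[v]`
likewise round up, which forces `(n - 2) / 3 + 2` elements in total (`not_mem_of_dominating`).
-/

open SimpleGraph

/-- The closed neighborhood of the vertex `u` in the path on `Fin n`, as a finset. -/
def pathNbhd (n : ℕ) (u : Fin n) : Finset (Fin n) :=
  Finset.univ.filter (fun w => w.val ≤ u.val + 1 ∧ u.val ≤ w.val + 1)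

/-- The finset form of the closed neighborhood `N[T]` in the path on `Fin n`. -/
def pathCover (n : ℕ) (T : Finset (Fin n)) : Finset (Fin n) :=
  T.biUnion (pathNbhd n)

lemma mem_pathNbhd {n : ℕ} {u w : Fin n} :
    w ∈ pathNbhd n u ↔ w.val ≤ u.val + 1 ∧ u.val ≤ w.val + 1 := by
  simp [pathNbhd]

lemma mem_pathCover {n : ℕ} {T : Finset (Fin n)} {w : Fin n} :
    w ∈ pathCover n T ↔ ∃ u ∈ T, w.val ≤ u.val + 1 ∧ u.val ≤ w.val + 1 := by
  simp [pathCover, mem_pathNbhd]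

lemma closedNbhd_coe {n : ℕ} (T : Finset (Fin n)) :
    closedNbhd (pathGraph n) (T : Set (Fin n)) = (pathCover n T : Set (Fin n)) := by
  ext w
  simp only [closedNbhd, Set.mem_ofPred_eq, Finset.mem_coe, mem_pathCover, pathGraph_adj]
  refine exists_congr fun u => and_congr_right fun _ => ?_
  rw [Fin.ext_iff]
  omega

lemma isPDomSet_iff_s18 {n : ℕ} (hn : 2 ≤ n) (t : ℕ) (T : Finset (Fin n)) :
    IsPDomSet (pathGraph n) ((t : ℝ) / (n : ℝ)) (T : Set (Fin n)) ↔
      t ≤ (pathCover n T).card := by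
  have h0 : (n : ℝ) ≠ 0 := by
    have : n ≠ 0 := by omega
    exact_mod_cast this
  rw [IsPDomSet, closedNbhd_coe, Set.ncard_coe_finset, Fintype.card_fin, div_mul_cancel₀ _ h0]
  exact Nat.cast_le

lemma pathNbhd_image {n : ℕ} (u : Fin n) :
    (pathNbhd n u).image Fin.val = (Finset.Icc (u.val - 1) (u.val + 1)).filter (· < n) := by
  ext x
  simp only [Finset.mem_image, mem_pathNbhd, Finset.mem_filter, Finset.mem_Icc]
  constructor
  · rintro ⟨w, hw, rfl⟩
    exact ⟨by omega, w.isLt⟩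
  · rintro ⟨h, hx⟩
    exact ⟨⟨x, hx⟩, by simp only; omega, rfl⟩

lemma card_pathNbhd_eq {n : ℕ} (u : Fin n) :
    (pathNbhd n u).card = ((Finset.Icc (u.val - 1) (u.val + 1)).filter (· < n)).card := by
  rw [← pathNbhd_image, Finset.card_image_of_injective _ Fin.val_injective]

lemma card_pathNbhd_le {n : ℕ} (u : Fin n) : (pathNbhd n u).card ≤ 3 := by
  rw [card_pathNbhd_eq]
  refine (Finset.card_filter_le _ _).trans ?_
  rw [Nat.card_Icc]
  omega

lemma card_pathNbhd_leaf {n : ℕ} (u : Fin n) (hu : u.val = 0 ∨ u.val + 1 = n) :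
    (pathNbhd n u).card ≤ 2 := by
  rw [card_pathNbhd_eq]
  have hsub : (Finset.Icc (u.val - 1) (u.val + 1)).filter (· < n) ⊆
      if u.val = 0 then Finset.Icc 0 1 else Finset.Icc (u.val - 1) u.val := by
    intro x hx
    simp only [Finset.mem_filter, Finset.mem_Icc] at hx
    split_ifs with h <;> simp only [Finset.mem_Icc] <;> omega
  refine (Finset.card_le_card hsub).trans ?_
  split_ifs with h <;> rw [Nat.card_Icc] <;> omega

lemma three_le_card_pathNbhd {n : ℕ} (hn : 2 ≤ n) (u : Fin n) :
    3 ≤ (pathNbhd n u).card + if u.val = 0 ∨ u.val + 1 = n then 1 else 0 := by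
  have hu := u.isLt
  rw [card_pathNbhd_eq]
  split_ifs with h
  · have hsub : (if u.val = 0 then Finset.Icc 0 1 else Finset.Icc (u.val - 1) u.val) ⊆
        (Finset.Icc (u.val - 1) (u.val + 1)).filter (· < n) := by
      intro x hx
      simp only [Finset.mem_filter, Finset.mem_Icc]
      split_ifs at hx with h' <;> simp only [Finset.mem_Icc] at hx <;> omega
    have hc := Finset.card_le_card hsub
    split_ifs at hc with h' <;> rw [Nat.card_Icc] at hc <;> omega
  · rw [Finset.filter_true_of_mem, Nat.card_Icc]
    · omega
    · intro x hx
      rw [Finset.mem_Icc] at hx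
      omega

lemma card_pathCover_le {n : ℕ} (T : Finset (Fin n)) :
    (pathCover n T).card ≤ 3 * T.card := by
  rw [mul_comm]
  exact Finset.card_biUnion_le_card_mul _ _ _ fun u _ => card_pathNbhd_le u

lemma interior_of_cover {n : ℕ} (T : Finset (Fin n)) (v : Fin n) (hv : v ∈ T)
    (h : 3 * T.card ≤ (pathCover n T).card) : 1 ≤ v.val ∧ v.val ≤ n - 2 := by
  by_contra hcon
  have hl : v.val = 0 ∨ v.val + 1 = n := by omega
  have h1 := card_pathNbhd_leaf v hl
  have h2 : pathCover n T ⊆ pathNbhd n v ∪ pathCover n (T.erase v) := by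
    intro w hw
    rw [mem_pathCover] at hw
    obtain ⟨u, hu, hw⟩ := hw
    rw [Finset.mem_union, mem_pathNbhd, mem_pathCover]
    by_cases huv : u = v
    · subst huv
      exact Or.inl hw
    · exact Or.inr ⟨u, Finset.mem_erase.2 ⟨huv, hu⟩, hw⟩
  have h3 := (Finset.card_le_card h2).trans (Finset.card_union_le _ _)
  have h4 := card_pathCover_le (T.erase v)
  have h5 := Finset.card_erase_add_one hv
  omega

/-- The closed neighborhoods of vertices in one residue class modulo `3` are disjoint, so such a
set covers three vertices per element, up to one lost for each leaf it contains. -/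
lemma card_pathCover_of_res {n : ℕ} (hn : 2 ≤ n) (T : Finset (Fin n)) (r : ℕ)
    (hT : ∀ u ∈ T, u.val % 3 = r) :
    3 * T.card ≤ (pathCover n T).card +
      (T.filter (fun u => u.val = 0 ∨ u.val + 1 = n)).card := by
  have hdisj : (T : Set (Fin n)).PairwiseDisjoint (pathNbhd n) := by
    intro a ha b hb hab
    rw [Function.onFun, Finset.disjoint_left]
    intro w hwa hwb
    rw [mem_pathNbhd] at hwa hwb
    have h1 := hT a ha
    have h2 := hT b hb
    exact hab (Fin.ext (by omega))
  rw [pathCover, Finset.card_biUnion hdisj, Finset.card_filter, ← Finset.sum_add_distrib,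
    mul_comm, ← smul_eq_mul]
  exact Finset.card_nsmul_le_sum _ _ _ fun u _ => three_le_card_pathNbhd hn u

/-- The vertex set `{a, a + 3, …, a + 3 (l - 1)}`, provided that it lies in the path, has a subset
of each size `k` with `1 ≤ k ≤ l` through any prescribed element. -/
lemma exists_prog {n : ℕ} (a l k : ℕ) (hl : a + 3 * l ≤ n + 2) (hk : 1 ≤ k) (hkl : k ≤ l)
    (v : Fin n) (hva : a ≤ v.val) (hvl : v.val < a + 3 * l) (hvr : v.val % 3 = a % 3) :
    ∃ T : Finset (Fin n), T.card = k ∧ v ∈ T ∧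
      ∀ u ∈ T, u.val % 3 = a % 3 ∧ a ≤ u.val ∧ u.val + 3 ≤ a + 3 * l := by
  let C : Finset (Fin n) := Finset.univ.filter
    (fun u => u.val % 3 = a % 3 ∧ a ≤ u.val ∧ u.val + 3 ≤ a + 3 * l)
  have hC : l ≤ C.card := by
    have h : Finset.range l ⊆ C.image (fun u => (u.val - a) / 3) := by
      intro i hi
      rw [Finset.mem_range] at hi
      rw [Finset.mem_image]
      refine ⟨⟨a + 3 * i, by omega⟩, ?_, ?_⟩
      · simp only [C, Finset.mem_filter, Finset.mem_univ, true_and]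
        omega
      · simp only
        omega
    have := (Finset.card_le_card h).trans Finset.card_image_le
    rwa [Finset.card_range] at this
  have hvC : v ∈ C := by
    simp only [C, Finset.mem_filter, Finset.mem_univ, true_and]
    omega
  obtain ⟨T, h1, h2, h3⟩ := Finset.exists_subsuperset_card_eq
    (Finset.singleton_subset_iff.2 hvC) (by simpa using hk) (hkl.trans hC)
  refine ⟨T, h3, Finset.singleton_subset_iff.1 h1, fun u hu => ?_⟩
  simpa [C] using h2 hu

/-- A set through `v` covering `t` vertices with `⌈t / 3⌉` elements is a `γ_p`-set for
`p = t / n`. -/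
lemma inInfluence_of_cover {n : ℕ} (hn : 2 ≤ n) (t : ℕ) (v : Fin n) (T : Finset (Fin n))
    (hv : v ∈ T) (ht : t ≤ (pathCover n T).card) (hT : 3 * T.card ≤ t + 2) :
    InInfluence (pathGraph n) ((t : ℝ) / (n : ℝ)) v := by
  refine ⟨T, ⟨(isPDomSet_iff_s18 hn t T).2 ht, ?_⟩, hv⟩
  rw [Set.ncard_coe_finset]
  refine le_antisymm ?_ (Nat.sInf_le ⟨T, (isPDomSet_iff_s18 hn t T).2 ht, Set.ncard_coe_finset T⟩)
  refine le_csInf ⟨_, T, (isPDomSet_iff_s18 hn t T).2 ht, rfl⟩ ?_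
  rintro s ⟨S, hS, rfl⟩
  obtain ⟨S, rfl⟩ := S.toFinite.exists_finset_coe
  rw [isPDomSet_iff_s18 hn] at hS
  rw [Set.ncard_coe_finset]
  have := card_pathCover_le S
  omega

/-- Any set covering `t` vertices bounds the size of the `γ_p`-sets for `p = t / n`. -/
lemma exists_finset_of_inInfluence {n : ℕ} (hn : 2 ≤ n) (t : ℕ) (v : Fin n)
    (T₀ : Finset (Fin n)) (h₀ : t ≤ (pathCover n T₀).card)
    (h : InInfluence (pathGraph n) ((t : ℝ) / (n : ℝ)) v) :
    ∃ T : Finset (Fin n), v ∈ T ∧ t ≤ (pathCover n T).card ∧ T.card ≤ T₀.card := by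
  obtain ⟨S, ⟨hS, hc⟩, hv⟩ := h
  obtain ⟨S, rfl⟩ := S.toFinite.exists_finset_coe
  rw [isPDomSet_iff_s18 hn] at hS
  rw [Set.ncard_coe_finset] at hc
  refine ⟨S, hv, hS, hc.trans_le ?_⟩
  exact Nat.sInf_le ⟨T₀, (isPDomSet_iff_s18 hn t T₀).2 h₀, Set.ncard_coe_finset T₀⟩

/-- Inside a residue class other than `2`, one can cover `3k + 2` vertices with `k + 1` elements,
for every `k ≤ m`. -/
lemma exists_cover_res_ne_two {m n : ℕ} (hm : n = 3 * m + 2) (k : ℕ) (hk : k ≤ m) (v : Fin n)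
    (hv : v.val % 3 ≠ 2) :
    ∃ T : Finset (Fin n), T.card = k + 1 ∧ v ∈ T ∧ 3 * k + 2 ≤ (pathCover n T).card := by
  have hvn := v.isLt
  obtain ⟨T, h1, h2, h3⟩ := exists_prog (n := n) (v.val % 3) (m + 1) (k + 1) (by omega) (by omega)
    (by omega) v (by omega) (by omega) (by omega)
  refine ⟨T, h1, h2, ?_⟩
  have h4 := card_pathCover_of_res (by omega) T (v.val % 3) (fun u hu => by
    have := (h3 u hu).1
    omega)
  -- The two leaves have residues `0` and `1`, so at most one of them lies in `T`.
  have h5 : (T.filter (fun u => u.val = 0 ∨ u.val + 1 = n)).card ≤ 1 := by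
    rw [Finset.card_le_one]
    intro a ha b hb
    rw [Finset.mem_filter] at ha hb
    have h6 := (h3 a ha.1).1
    have h7 := (h3 b hb.1).1
    exact Fin.ext (by omega)
  omega

lemma exists_cover_interior {m n : ℕ} (hm : n = 3 * m + 2) (k : ℕ) (hk1 : 1 ≤ k) (hk : k ≤ m)
    (v : Fin n) (hv0 : 1 ≤ v.val) (hv1 : v.val ≤ n - 2) :
    ∃ T : Finset (Fin n), T.card = k ∧ v ∈ T ∧ 3 * k ≤ (pathCover n T).card := by
  have hvn := v.isLt
  -- The progression starts at the representative of `v` modulo `3` in `{1, 2, 3}`.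
  obtain ⟨T, h1, h2, h3⟩ := exists_prog (n := n) ((v.val - 1) % 3 + 1) m k (by omega) (by omega)
    (by omega) v (by omega) (by omega) (by omega)
  refine ⟨T, h1, h2, ?_⟩
  have h4 := card_pathCover_of_res (by omega) T _ (fun u hu => (h3 u hu).1)
  have h5 : T.filter (fun u => u.val = 0 ∨ u.val + 1 = n) = ∅ := by
    rw [Finset.filter_eq_empty_iff]
    intro u hu
    have := h3 u hu
    omega
  rw [h5, Finset.card_empty] at h4
  omega

/-- The residue class `2` together with the leaf `0` has `m + 1` elements and covers every vertex
except possibly the leaf `n - 1`. -/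
lemma exists_cover_res_two {m n : ℕ} (hm : n = 3 * m + 2) (v : Fin n) (hv : v.val % 3 = 2) :
    ∃ T : Finset (Fin n), T.card ≤ m + 1 ∧ v ∈ T ∧ 3 * m + 1 ≤ (pathCover n T).card := by
  have hvn := v.isLt
  obtain ⟨T, h1, h2, h3⟩ := exists_prog (n := n) 2 m m (by omega) (by omega)
    le_rfl v (by omega) (by omega) (by omega)
  let z : Fin n := ⟨0, by omega⟩
  refine ⟨insert z T, (Finset.card_insert_le _ _).trans (by omega),
    Finset.mem_insert_of_mem h2, ?_⟩
  have h4 := card_pathCover_of_res (by omega) T _ (fun u hu => (h3 u hu).1)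
  have h5 : T.filter (fun u => u.val = 0 ∨ u.val + 1 = n) = ∅ := by
    rw [Finset.filter_eq_empty_iff]
    intro u hu
    have := h3 u hu
    omega
  rw [h5, Finset.card_empty] at h4
  have h6 : insert z (pathCover n T) ⊆ pathCover n (insert z T) := by
    intro w hw
    rw [Finset.mem_insert, mem_pathCover] at hw
    rw [mem_pathCover]
    rcases hw with rfl | ⟨u, hu, hw⟩
    · exact ⟨z, Finset.mem_insert_self _ _, by omega⟩
    · exact ⟨u, Finset.mem_insert_of_mem hu, hw⟩
  have h7 : z ∉ pathCover n T := by
    rw [mem_pathCover]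
    rintro ⟨u, hu, hz⟩
    have := h3 u hu
    simp only [z] at hz
    omega
  have h8 := Finset.card_le_card h6
  rw [Finset.card_insert_of_notMem h7] at h8
  omega

/-- A dominating set with only `m + 1` elements contains no vertex of residue `2`: it would need
too many elements on each of the two sides. -/
lemma not_mem_of_dominating {m n : ℕ} (hm : n = 3 * m + 2) (T : Finset (Fin n))
    (hcov : n ≤ (pathCover n T).card) (hT : T.card ≤ m + 1) (v : Fin n) (hv : v ∈ T) :
    v.val % 3 ≠ 2 := by
  intro hr
  have hvn := v.isLt
  have hall : ∀ w : Fin n, w ∈ pathCover n T := by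
    have : pathCover n T = Finset.univ := by
      apply Finset.eq_univ_of_card
      rw [Fintype.card_fin]
      exact le_antisymm ((Finset.card_le_univ _).trans_eq (Fintype.card_fin n)) hcov
    simp [this]
  have hL : Finset.Iio (v.val - 1) ⊆
      (pathCover n (T.filter (fun u => u.val < v.val))).image Fin.val := by
    intro x hx
    rw [Finset.mem_Iio] at hx
    obtain ⟨u, hu, h⟩ := mem_pathCover.1 (hall ⟨x, by omega⟩)
    refine Finset.mem_image.2 ⟨⟨x, by omega⟩, mem_pathCover.2 ⟨u, ?_, h⟩, rfl⟩
    simp only at h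
    exact Finset.mem_filter.2 ⟨hu, by omega⟩
  have hR : Finset.Ico (v.val + 2) n ⊆
      (pathCover n (T.filter (fun u => v.val < u.val))).image Fin.val := by
    intro x hx
    rw [Finset.mem_Ico] at hx
    obtain ⟨u, hu, h⟩ := mem_pathCover.1 (hall ⟨x, by omega⟩)
    refine Finset.mem_image.2 ⟨⟨x, by omega⟩, mem_pathCover.2 ⟨u, ?_, h⟩, rfl⟩
    simp only at h
    exact Finset.mem_filter.2 ⟨hu, by omega⟩
  have hL' := ((Finset.card_le_card hL).trans Finset.card_image_le).trans (card_pathCover_le _)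
  have hR' := ((Finset.card_le_card hR).trans Finset.card_image_le).trans (card_pathCover_le _)
  rw [Nat.card_Iio] at hL'
  rw [Nat.card_Ico] at hR'
  have hsub : T.filter (fun u => u.val < v.val) ∪ T.filter (fun u => v.val < u.val) ⊆
      T.erase v := by
    intro u hu
    simp only [Finset.mem_union, Finset.mem_filter] at hu
    refine Finset.mem_erase.2 ⟨?_, by tauto⟩
    rintro rfl
    omega
  have hdisj : Disjoint (T.filter (fun u => u.val < v.val))
      (T.filter (fun u => v.val < u.val)) := by
    rw [Finset.disjoint_left]
    intro u h1 h2
    rw [Finset.mem_filter] at h1 h2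
    omega
  have h1 := Finset.card_le_card hsub
  rw [Finset.card_union_of_disjoint hdisj] at h1
  have h2 := Finset.card_erase_add_one hv
  omega

/-- For `P_n` with `n ≡ 2 (mod 3)`.  Vertices of `pathGraph n` are `Fin n`,
with `v_i` (1-based) corresponding to the index `i - 1` (0-based); in particular
`v_i` with `i ≡ 0 (mod 3)` corresponds to `v.val ≡ 2 (mod 3)`. -/
theorem stmt18 (n : ℕ) (hn : 2 ≤ n) (hmod : n % 3 = 2) :
    (∀ k : ℕ, 3 * k + 1 ≤ n →
      ((∀ v : Fin n, InInfluence (pathGraph n) ((3 * k + 1 : ℝ) / (n : ℝ)) v) ∧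
        (3 * k + 2 < n →
          ∀ v : Fin n, InInfluence (pathGraph n) ((3 * k + 2 : ℝ) / (n : ℝ)) v))) ∧
    (∀ k : ℕ, 1 ≤ k → 3 * k ≤ n - 2 →
      ∀ v : Fin n, InInfluence (pathGraph n) ((3 * k : ℝ) / (n : ℝ)) v ↔
        1 ≤ v.val ∧ v.val ≤ n - 2) ∧
    (∀ v : Fin n, InInfluence (pathGraph n) 1 v ↔ v.val % 3 ≠ 2) := by
  obtain ⟨m, hm⟩ : ∃ m, n = 3 * m + 2 := ⟨n / 3, by omega⟩
  -- Below the full path, `k + 1` vertices through any `v` can cover `3k + 2`.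
  have key : ∀ k < m, ∀ v : Fin n, ∃ T : Finset (Fin n), T.card = k + 1 ∧ v ∈ T ∧
      3 * k + 2 ≤ (pathCover n T).card := by
    intro k hk v
    by_cases hv : v.val % 3 = 2
    · obtain ⟨T, h1, h2, h3⟩ := exists_cover_interior hm (k + 1) (by omega) (by omega) v
        (by omega) (by omega)
      exact ⟨T, h1, h2, by omega⟩
    · exact exists_cover_res_ne_two hm k hk.le v hv
  refine ⟨fun k hk => ⟨fun v => ?_, fun hk2 v => ?_⟩, fun k hk1 hk v => ?_, fun v => ?_⟩
  · have hcast : (3 * k + 1 : ℝ) = ((3 * k + 1 : ℕ) : ℝ) := by push_cast; ring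
    rw [hcast]
    by_cases hkm : k < m
    · obtain ⟨T, h1, h2, h3⟩ := key k hkm v
      exact inInfluence_of_cover hn _ v T h2 (by omega) (by omega)
    · obtain rfl : k = m := by omega
      by_cases hv : v.val % 3 = 2
      · obtain ⟨T, h1, h2, h3⟩ := exists_cover_res_two hm v hv
        exact inInfluence_of_cover hn _ v T h2 (by omega) (by omega)
      · obtain ⟨T, h1, h2, h3⟩ := exists_cover_res_ne_two hm k le_rfl v hv
        exact inInfluence_of_cover hn _ v T h2 (by omega) (by omega)
  · have hcast : (3 * k + 2 : ℝ) = ((3 * k + 2 : ℕ) : ℝ) := by push_cast; ring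
    rw [hcast]
    obtain ⟨T, h1, h2, h3⟩ := key k (by omega) v
    exact inInfluence_of_cover hn _ v T h2 (by omega) (by omega)
  · have hcast : (3 * k : ℝ) = ((3 * k : ℕ) : ℝ) := by push_cast; ring
    rw [hcast]
    constructor
    · intro h
      obtain ⟨T₀, h1, -, h3⟩ := exists_cover_interior hm k hk1 (by omega) ⟨1, by omega⟩
        le_rfl (by simp only; omega)
      obtain ⟨T, h4, h5, h6⟩ := exists_finset_of_inInfluence hn _ v T₀ h3 h
      exact interior_of_cover T v h4 (by omega)
    · rintro ⟨hv0, hv1⟩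
      obtain ⟨T, h1, h2, h3⟩ := exists_cover_interior hm k hk1 (by omega) v hv0 hv1
      exact inInfluence_of_cover hn _ v T h2 (by omega) (by omega)
  · have hcast : (1 : ℝ) = (n : ℝ) / (n : ℝ) := by
      have : (n : ℝ) ≠ 0 := by
        have : n ≠ 0 := by omega
        exact_mod_cast this
      rw [div_self this]
    rw [hcast]
    constructor
    · intro h
      obtain ⟨T₀, h1, -, h3⟩ := exists_cover_res_ne_two hm m le_rfl ⟨0, by omega⟩ (by simp)
      obtain ⟨T, h4, h5, h6⟩ := exists_finset_of_inInfluence hn _ v T₀ (by omega) h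
      exact not_mem_of_dominating hm T h5 (by omega) v h4
    · intro hv
      obtain ⟨T, h1, h2, h3⟩ := exists_cover_res_ne_two hm m le_rfl v hv
      exact inInfluence_of_cover hn _ v T h2 (by omega) (by omega)
end
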